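/- Let ρ and σ be finite positive Borel measures on ℝ with ρ absolutely continuous with respect to σ, and let M_ρ and M_σ denote their Borel transforms. Then for σ_s-almost every E ∈ ℝ, where σ_s is the part of σ singular with respect to Lebesgue measure, the ratio M_ρ(E + iε)/M_σ(E + iε) converges, as ε → 0⁺, to the Radon–Nikodym derivative (dρ/dσ)(E). -/

import Mathlib

open MeasureTheory Filter

open scoped ENNReal Topology

/-!
For `r ∈ L²(μ)` write `F_f` for the Borel transform of `f μ`, put `h = F_r / F_1`, and let `P_z` be
the Poisson kernel. The function `G = 2 F_{r²} - F_r² / F_1` is holomorphic in the upper half-plane,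
and `Im G(z) = ∫ (r² + |r - h(z)|²) P_z dμ ≥ ½ |h(z)|² ∫ P_z dμ`. By the Herglotz representation,
`Im G` is essentially the Poisson integral of a measure `κ` of mass at most `3 ∫ r² dμ`, so
differentiation of measures bounds the boundary values of `|h|²` almost everywhere with respect to
the singular part of `μ` by a multiple of `dκ/dμ`.

Since `Im F_1 → ∞` almost everywhere with respect to the singular part, `F_g / F_1 → g` is
elementary for Lipschitz `g`, and the bound above extends this to `L²(μ)` by density. The general
case follows by applying this to `dρ/dτ` and `dσ/dτ`, which are bounded, where `τ = ρ + σ`.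
-/

section PoissonKernel

/-- The Poisson kernel of the upper half-plane, without the usual factor `1 / π`: it is the
imaginary part of `(x - z)⁻¹`. -/
noncomputable def halfPlanePoissonKernel (z : ℂ) (x : ℝ) : ℝ :=
  z.im / ((x - z.re) ^ 2 + z.im ^ 2)

/-- The Poisson integral of a measure on the real line, for the kernel
`halfPlanePoissonKernel`. -/
noncomputable def poissonIntegral (μ : Measure ℝ) (z : ℂ) : ℝ :=
  ∫ x, halfPlanePoissonKernel z x ∂μ

variable {z : ℂ}

lemma halfPlanePoissonKernel_pos (hz : 0 < z.im) (x : ℝ) : 0 < halfPlanePoissonKernel z x := by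
  unfold halfPlanePoissonKernel; positivity

lemma halfPlanePoissonKernel_le_inv_im (hz : 0 < z.im) (x : ℝ) :
    halfPlanePoissonKernel z x ≤ z.im⁻¹ := by
  rw [halfPlanePoissonKernel, div_le_iff₀ (by positivity), inv_mul_eq_div, le_div_iff₀ hz]
  nlinarith [sq_nonneg (x - z.re)]

@[fun_prop]
lemma measurable_halfPlanePoissonKernel (z : ℂ) : Measurable (halfPlanePoissonKernel z) := by
  unfold halfPlanePoissonKernel; fun_prop

lemma norm_halfPlanePoissonKernel_le_inv_im (hz : 0 < z.im) (x : ℝ) :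
    ‖halfPlanePoissonKernel z x‖ ≤ z.im⁻¹ := by
  rw [Real.norm_of_nonneg (halfPlanePoissonKernel_pos hz x).le]
  exact halfPlanePoissonKernel_le_inv_im hz x

lemma integrable_halfPlanePoissonKernel (μ : Measure ℝ) [IsFiniteMeasure μ] (hz : 0 < z.im) :
    Integrable (halfPlanePoissonKernel z) μ :=
  .of_bound (by fun_prop) z.im⁻¹ (.of_forall (norm_halfPlanePoissonKernel_le_inv_im hz))

lemma poissonIntegral_nonneg (μ : Measure ℝ) (hz : 0 < z.im) : 0 ≤ poissonIntegral μ z :=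
  integral_nonneg fun x => (halfPlanePoissonKernel_pos hz x).le

lemma poissonIntegral_pos (μ : Measure ℝ) [IsFiniteMeasure μ] [NeZero μ] (hz : 0 < z.im) :
    0 < poissonIntegral μ z := by
  refine (integral_pos_iff_support_of_nonneg (fun x => (halfPlanePoissonKernel_pos hz x).le)
    (integrable_halfPlanePoissonKernel μ hz)).2 ?_
  rw [Function.support_eq_univ fun x => (halfPlanePoissonKernel_pos hz x).ne']
  exact Measure.measure_univ_pos.2 (NeZero.ne μ)

lemma ofReal_poissonIntegral (μ : Measure ℝ) [IsFiniteMeasure μ] (hz : 0 < z.im) :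
    ENNReal.ofReal (poissonIntegral μ z) =
      ∫⁻ x, ENNReal.ofReal (halfPlanePoissonKernel z x) ∂μ :=
  ofReal_integral_eq_lintegral_ofReal (integrable_halfPlanePoissonKernel μ hz)
    (.of_forall fun x => (halfPlanePoissonKernel_pos hz x).le)

lemma setOfPred_le_halfPlanePoissonKernel_eq_closedBall {t : ℝ} (hz : 0 < z.im) (ht : 0 < t)
    (htz : z.im ≤ t⁻¹) :
    {x | t ≤ halfPlanePoissonKernel z x} =
      Metric.closedBall z.re √(z.im * t⁻¹ - z.im ^ 2) := by
  have hnonneg : 0 ≤ z.im * t⁻¹ - z.im ^ 2 := by nlinarith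
  ext x
  rw [Set.mem_ofPred_eq, Metric.mem_closedBall, Real.dist_eq, ← Real.sqrt_sq_eq_abs,
    Real.sqrt_le_sqrt_iff hnonneg, halfPlanePoissonKernel, le_div_iff₀ (by positivity),
    le_sub_iff_add_le, ← div_eq_mul_inv, le_div_iff₀ ht, mul_comm]

lemma setOfPred_le_halfPlanePoissonKernel_eq_empty {t : ℝ} (hz : 0 < z.im) (ht : z.im⁻¹ < t) :
    {x | t ≤ halfPlanePoissonKernel z x} = ∅ :=
  Set.eq_empty_of_forall_notMem fun x hx =>
    (hx.trans (halfPlanePoissonKernel_le_inv_im hz x)).not_gt ht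

end PoissonKernel

section BoundaryBehaviour

variable {μ κ ν : Measure ℝ}

lemma measure_closedBall_div_volume_le_poissonIntegral (μ : Measure ℝ) [IsFiniteMeasure μ] {z : ℂ}
    (hz : 0 < z.im) :
    μ (Metric.closedBall z.re z.im) / volume (Metric.closedBall z.re z.im) ≤
      ENNReal.ofReal (poissonIntegral μ z) := by
  have hball : Metric.closedBall z.re z.im = {x | (2 * z.im)⁻¹ ≤ halfPlanePoissonKernel z x} := by
    have hle : z.im ≤ (2 * z.im)⁻¹⁻¹ := by rw [inv_inv]; linarith
    rw [setOfPred_le_halfPlanePoissonKernel_eq_closedBall hz (by positivity) hle]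
    congr 1
    rw [eq_comm, inv_inv, Real.sqrt_eq_iff_mul_self_eq_of_pos hz]
    ring
  have hmarkov := mul_meas_ge_le_integral_of_nonneg
    (.of_forall fun x => (halfPlanePoissonKernel_pos hz x).le)
    (integrable_halfPlanePoissonKernel μ hz) (2 * z.im)⁻¹
  rw [Real.volume_closedBall, ENNReal.div_eq_inv_mul, ← ENNReal.ofReal_inv_of_pos (by positivity),
    ← ofReal_measureReal, ← ENNReal.ofReal_mul (by positivity), hball]
  exact ENNReal.ofReal_le_ofReal hmarkov

lemma tendsto_poissonIntegral_atTop (μ : Measure ℝ) [IsFiniteMeasure μ] {E : ℝ}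
    (h : Tendsto (fun r => volume (Metric.closedBall E r) / μ (Metric.closedBall E r))
      (𝓝[>] 0) (𝓝 0)) :
    Tendsto (fun ε : ℝ => poissonIntegral μ (E + ε * Complex.I)) (𝓝[>] 0) atTop := by
  rw [← ENNReal.tendsto_ofReal_nhds_top]
  have hinv := tendsto_inv_iff.2 h
  rw [ENNReal.inv_zero] at hinv
  refine tendsto_nhds_top_mono hinv ?_
  filter_upwards [self_mem_nhdsWithin] with ε (hε : 0 < ε)
  rw [ENNReal.inv_div (.inr measure_closedBall_lt_top.ne)
    (.inr (Metric.measure_closedBall_pos _ _ hε).ne')]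
  simpa using measure_closedBall_div_volume_le_poissonIntegral μ (z := E + ε * Complex.I)
    (by simpa using hε)

lemma ae_rnDeriv_eq_zero_of_mutuallySingular {α : Type*} {mα : MeasurableSpace α}
    {κ μ ν : Measure α} (hνμ : ν ≪ μ) (hν : ν ⟂ₘ κ) : ∀ᵐ x ∂ν, κ.rnDeriv μ x = 0 := by
  obtain ⟨s, hs, hνs, hκs⟩ := hν
  have hμs : ∀ᵐ x ∂μ.restrict sᶜ, κ.rnDeriv μ x = 0 :=
    (lintegral_eq_zero_iff (Measure.measurable_rnDeriv κ μ)).1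
      (le_antisymm ((Measure.setLIntegral_rnDeriv_le sᶜ).trans hκs.le) zero_le)
  filter_upwards [hνμ.ae_le ((ae_restrict_iff' hs.compl).1 hμs),
    measure_eq_zero_iff_ae_notMem.1 hνs] with x hx hxs using hx hxs

lemma ae_tendsto_poissonIntegral_atTop [IsFiniteMeasure μ] (hνμ : ν ≪ μ) (hν : ν ⟂ₘ volume) :
    ∀ᵐ E : ℝ ∂ν, Tendsto (fun ε : ℝ => poissonIntegral μ (E + ε * Complex.I)) (𝓝[>] 0) atTop := by
  filter_upwards [ae_rnDeriv_eq_zero_of_mutuallySingular hνμ hν,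
    hνμ.ae_le (Besicovitch.ae_tendsto_rnDeriv volume μ)] with E hE hlim
  exact tendsto_poissonIntegral_atTop μ (hE ▸ hlim)

lemma lintegral_halfPlanePoissonKernel_eq_lintegral_meas_le (μ : Measure ℝ) {z : ℂ}
    (hz : 0 < z.im) :
    ∫⁻ x, ENNReal.ofReal (halfPlanePoissonKernel z x) ∂μ =
      ∫⁻ t in Set.Ioi 0, μ {x | t ≤ halfPlanePoissonKernel z x} :=
  lintegral_eq_lintegral_meas_le μ (.of_forall fun x => (halfPlanePoissonKernel_pos hz x).le)
    (by fun_prop)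

lemma measure_le_halfPlanePoissonKernel_le {c : ℝ≥0∞} {z : ℂ} (hz : 0 < z.im) {δ t : ℝ}
    (hδ : 0 < δ)
    (h : ∀ s ∈ Set.Ioo 0 δ,
      κ (Metric.closedBall z.re s) ≤ c * μ (Metric.closedBall z.re s))
    (ht : z.im / (δ ^ 2 + z.im ^ 2) < t) (ht' : t ≠ z.im⁻¹) :
    κ {x | t ≤ halfPlanePoissonKernel z x} ≤ c * μ {x | t ≤ halfPlanePoissonKernel z x} := by
  have ht0 : 0 < t := lt_trans (by positivity) ht
  rcases ht'.lt_or_gt with hlt | hgt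
  · have hz_lt : z.im < t⁻¹ := (lt_inv_comm₀ ht0 hz).1 hlt
    have hradius_lt : z.im * t⁻¹ - z.im ^ 2 < δ ^ 2 := by
      rw [div_lt_comm₀ (by positivity) ht0] at ht
      rwa [← div_eq_mul_inv, sub_lt_iff_lt_add]
    rw [setOfPred_le_halfPlanePoissonKernel_eq_closedBall hz ht0 hz_lt.le]
    exact h _ ⟨Real.sqrt_pos.2 (by nlinarith), (Real.sqrt_lt' hδ).2 hradius_lt⟩
  · simp [setOfPred_le_halfPlanePoissonKernel_eq_empty hz hgt]

/-- Layer-cake comparison: the superlevel sets of the kernel are balls around `z.re`, and those of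
radius at least `δ` are the ones at height at most `z.im / (δ ^ 2 + z.im ^ 2)`. -/
lemma lintegral_halfPlanePoissonKernel_le {c : ℝ≥0∞} {z : ℂ} (hz : 0 < z.im) {δ : ℝ}
    (hδ : 0 < δ)
    (h : ∀ s ∈ Set.Ioo 0 δ,
      κ (Metric.closedBall z.re s) ≤ c * μ (Metric.closedBall z.re s)) :
    ∫⁻ x, ENNReal.ofReal (halfPlanePoissonKernel z x) ∂κ ≤
      ENNReal.ofReal (z.im / (δ ^ 2 + z.im ^ 2)) * κ Set.univ +
        c * ∫⁻ x, ENNReal.ofReal (halfPlanePoissonKernel z x) ∂μ := by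
  set m := z.im / (δ ^ 2 + z.im ^ 2)
  have hm : 0 ≤ m := by positivity
  have hmeas : Measurable fun t => μ {x | t ≤ halfPlanePoissonKernel z x} :=
    Antitone.measurable fun s t hst => measure_mono fun x hx => hst.trans hx
  have hlow : ∫⁻ t in Set.Ioc 0 m, κ {x | t ≤ halfPlanePoissonKernel z x} ≤
      ENNReal.ofReal m * κ Set.univ :=
    calc _ ≤ ∫⁻ _ in Set.Ioc 0 m, κ Set.univ :=
          lintegral_mono fun t => measure_mono (Set.subset_univ _)
      _ = _ := by rw [setLIntegral_const, Real.volume_Ioc, sub_zero, mul_comm]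
  have hhigh : ∫⁻ t in Set.Ioi m, κ {x | t ≤ halfPlanePoissonKernel z x} ≤
      c * ∫⁻ t in Set.Ioi 0, μ {x | t ≤ halfPlanePoissonKernel z x} := by
    rw [← lintegral_const_mul _ hmeas]
    refine (lintegral_mono_ae ?_).trans (lintegral_mono_set (Set.Ioi_subset_Ioi hm))
    filter_upwards [ae_restrict_of_ae (Measure.ae_ne volume z.im⁻¹),
      ae_restrict_mem measurableSet_Ioi] with t ht' ht
    exact measure_le_halfPlanePoissonKernel_le hz hδ h ht ht'
  rw [lintegral_halfPlanePoissonKernel_eq_lintegral_meas_le κ hz,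
    lintegral_halfPlanePoissonKernel_eq_lintegral_meas_le μ hz, ← Set.Ioc_union_Ioi_eq_Ioi hm,
    lintegral_union measurableSet_Ioi (Set.Ioc_disjoint_Ioi le_rfl), Set.Ioc_union_Ioi_eq_Ioi hm]
  exact add_le_add hlow hhigh

lemma poissonIntegral_le_of_measure_closedBall_le [IsFiniteMeasure κ] [IsFiniteMeasure μ]
    {c : NNReal} {z : ℂ} (hz : 0 < z.im) {δ : ℝ} (hδ : 0 < δ)
    (h : ∀ s ∈ Set.Ioo 0 δ,
      κ (Metric.closedBall z.re s) ≤ c * μ (Metric.closedBall z.re s)) :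
    poissonIntegral κ z ≤ z.im / δ ^ 2 * κ.real Set.univ + c * poissonIntegral μ z := by
  have hle := lintegral_halfPlanePoissonKernel_le hz hδ h
  have hμ := poissonIntegral_nonneg μ hz
  rw [← ofReal_poissonIntegral κ hz, ← ofReal_poissonIntegral μ hz, ← ENNReal.ofReal_coe_nnreal,
    ← ofReal_measureReal, ← ENNReal.ofReal_mul (by positivity),
    ← ENNReal.ofReal_mul (by positivity), ← ENNReal.ofReal_add (by positivity) (by positivity),
    ENNReal.ofReal_le_ofReal_iff (by positivity)] at hle
  refine hle.trans ?_
  gcongr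
  exact le_add_of_nonneg_right (sq_nonneg _)

lemma eventually_poissonIntegral_le [IsFiniteMeasure κ] [IsFiniteMeasure μ] {E c : ℝ} {d : ℝ≥0∞}
    (htop : Tendsto (fun ε : ℝ => poissonIntegral μ (E + ε * Complex.I)) (𝓝[>] 0) atTop)
    (hlim : Tendsto (fun r => κ (Metric.closedBall E r) / μ (Metric.closedBall E r))
      (𝓝[>] 0) (𝓝 d)) (hc : d < ENNReal.ofReal c) :
    ∀ᶠ ε : ℝ in 𝓝[>] 0, poissonIntegral κ (E + ε * Complex.I) ≤
      c * poissonIntegral μ (E + ε * Complex.I) := by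
  obtain ⟨c', hdc', hc'⟩ := ENNReal.lt_iff_exists_nnreal_btwn.1 hc
  have hc'c : (c' : ℝ) < c := (ENNReal.ofReal_lt_ofReal_iff_of_nonneg c'.coe_nonneg).1
    (by rwa [ENNReal.ofReal_coe_nnreal])
  obtain ⟨δ, hδ, hδc'⟩ := mem_nhdsGT_iff_exists_Ioo_subset.1 (hlim.eventually (gt_mem_nhds hdc'))
  have hball : ∀ s ∈ Set.Ioo 0 δ,
      κ (Metric.closedBall E s) ≤ c' * μ (Metric.closedBall E s) := fun s hs =>
    (ENNReal.div_le_iff_le_mul (.inr ENNReal.coe_ne_top) (.inl (measure_ne_top _ _))).1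
      (hδc' hs).le
  filter_upwards [htop.eventually_ge_atTop (1 / δ ^ 2 * κ.real Set.univ / (c - c')),
    Ioo_mem_nhdsGT zero_lt_one] with ε hlarge ⟨hε0, hε1⟩
  have hle : poissonIntegral κ (E + ε * Complex.I) ≤ ε / δ ^ 2 * κ.real Set.univ +
      c' * poissonIntegral μ (E + ε * Complex.I) := by
    simpa using poissonIntegral_le_of_measure_closedBall_le (z := E + ε * Complex.I)
      (by simpa using hε0) hδ (by simpa using hball)
  have herror : ε / δ ^ 2 * κ.real Set.univ ≤ 1 / δ ^ 2 * κ.real Set.univ := by gcongr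
  rw [div_le_iff₀ (by linarith)] at hlarge
  linarith

lemma ae_eventually_poissonIntegral_le [IsFiniteMeasure κ] [IsFiniteMeasure μ] (hνμ : ν ≪ μ)
    (hν : ν ⟂ₘ volume) :
    ∀ᵐ E : ℝ ∂ν, ∀ c : ℝ, κ.rnDeriv μ E < ENNReal.ofReal c →
      ∀ᶠ ε : ℝ in 𝓝[>] 0, poissonIntegral κ (E + ε * Complex.I) ≤
        c * poissonIntegral μ (E + ε * Complex.I) := by
  filter_upwards [ae_tendsto_poissonIntegral_atTop hνμ hν,
    hνμ.ae_le (Besicovitch.ae_tendsto_rnDeriv κ μ)] with E htop hlim c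
  exact eventually_poissonIntegral_le htop hlim

end BoundaryBehaviour

section HerglotzDisc

lemma one_sub_ne_zero_of_mem_ball {w : ℂ} (hw : w ∈ Metric.ball (0 : ℂ) 1) : 1 - w ≠ 0 := by
  rintro h
  simp [← sub_eq_zero.1 h] at hw

lemma continuousOn_poissonKernel_sphere {w : ℂ} (hw : w ∈ Metric.ball (0 : ℂ) 1) :
    ContinuousOn (poissonKernel 0 w) (Metric.sphere 0 1) := by
  simp only [funext (poissonKernel_def 0 w), sub_zero]
  refine .div (by fun_prop) (by fun_prop) fun ζ hζ h => ?_
  rw [sq_eq_zero_iff, norm_eq_zero, sub_eq_zero] at h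
  subst h
  exact Metric.sphere_disjoint_ball.notMem_of_mem_left hζ hw

lemma exists_measure_circleAverage_eq_integral :
    ∃ m : Measure (Metric.sphere (0 : ℂ) 1), IsFiniteMeasure m ∧
      ∀ f : ℂ → ℝ, ContinuousOn f (Metric.sphere 0 1) →
        Real.circleAverage f 0 1 = ∫ ζ, f ζ ∂m := by
  let e : ℝ → Metric.sphere (0 : ℂ) 1 := fun θ => ⟨circleMap 0 1 θ, by simp⟩
  have he : Measurable e := Continuous.measurable (by fun_prop)
  refine ⟨(2 * Real.pi).toNNReal⁻¹ • (volume.restrict (Set.Ioc 0 (2 * Real.pi))).map e,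
    inferInstance, fun f hf => ?_⟩
  have hf' : Continuous fun ζ : Metric.sphere (0 : ℂ) 1 => f ζ := hf.domRestrict
  rw [Real.circleAverage_def, intervalIntegral.integral_of_le Real.two_pi_pos.le,
    integral_smul_nnreal_measure, integral_map he.aemeasurable hf'.aestronglyMeasurable,
    NNReal.smul_def, NNReal.coe_inv, Real.coe_toNNReal _ Real.two_pi_pos.le]

lemma exists_finiteMeasure_integral_poissonKernel_eq_im {F : ℂ → ℂ}
    (hF : DiffContOnCl ℂ F (Metric.ball 0 1)) (hpos : ∀ ζ ∈ Metric.sphere (0 : ℂ) 1, 0 ≤ (F ζ).im) :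
    ∃ ν : FiniteMeasure (Metric.sphere (0 : ℂ) 1), ∀ w ∈ Metric.ball (0 : ℂ) 1,
      ∫ ζ, poissonKernel 0 w ζ ∂(ν : Measure (Metric.sphere (0 : ℂ) 1)) = (F w).im := by
  obtain ⟨m, _, hm⟩ := exists_measure_circleAverage_eq_integral
  have hFc : ContinuousOn F (Metric.sphere 0 1) :=
    hF.continuousOn_ball.mono Metric.sphere_subset_closedBall
  have hd : Continuous fun ζ : Metric.sphere (0 : ℂ) 1 => (F ζ).im :=
    Complex.continuous_im.comp hFc.domRestrict
  refine ⟨⟨m.withDensity fun ζ => ENNReal.ofReal (F ζ).im, isFiniteMeasure_withDensity_ofReal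
    (hd.integrable_of_hasCompactSupport (.of_compactSpace _)).2⟩, fun w hw => ?_⟩
  have hk := continuousOn_poissonKernel_sphere hw
  calc ∫ ζ, poissonKernel 0 w ζ ∂(m.withDensity fun ζ => ENNReal.ofReal (F ζ).im)
      = ∫ ζ, (poissonKernel 0 w ζ • F ζ).im ∂m := by
        rw [integral_withDensity_eq_integral_toReal_smul hd.measurable.ennreal_ofReal (by simp)]
        congr! 2 with ζ
        rw [ENNReal.toReal_ofReal (hpos ζ ζ.2), Complex.smul_im, smul_eq_mul, smul_eq_mul, mul_comm]
    _ = Real.circleAverage (Complex.imCLM ∘ (poissonKernel 0 w • F)) 0 1 :=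
        (hm _ (Complex.continuous_im.comp_continuousOn (hk.smul hFc))).symm
    _ = (F w).im := by
        rw [Complex.imCLM.circleAverage_comp_comm
          ((hk.smul hFc).circleIntegrable zero_le_one),
          hF.circleAverage_poissonKernel_smul hw, Complex.imCLM_apply]

lemma exists_finiteMeasure_integral_poissonKernel_eq_im_dilation {F : ℂ → ℂ}
    (hF : DifferentiableOn ℂ F (Metric.ball 0 1))
    (hpos : ∀ w ∈ Metric.ball (0 : ℂ) 1, 0 ≤ (F w).im) {r : ℝ} (hr : r ∈ Set.Ioo (0 : ℝ) 1) :
    ∃ ν : FiniteMeasure (Metric.sphere (0 : ℂ) 1), ∀ w ∈ Metric.ball (0 : ℂ) 1,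
      ∫ ζ, poissonKernel 0 w ζ ∂(ν : Measure (Metric.sphere (0 : ℂ) 1)) = (F (r * w)).im := by
  have hmem : ∀ w ∈ Metric.closedBall (0 : ℂ) 1, (r : ℂ) * w ∈ Metric.ball (0 : ℂ) 1 := by
    intro w hw
    rw [mem_closedBall_zero_iff] at hw
    rw [mem_ball_zero_iff, norm_mul, Complex.norm_real, Real.norm_of_nonneg hr.1.le]
    nlinarith [hr.1, hr.2]
  refine exists_finiteMeasure_integral_poissonKernel_eq_im (F := fun w => F (r * w)) ?_
    fun ζ hζ => hpos _ (hmem ζ (Metric.sphere_subset_closedBall hζ))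
  refine DifferentiableOn.diffContOnCl ?_
  rw [closure_ball _ one_ne_zero]
  exact hF.comp (by fun_prop) hmem

lemma tendsto_im_ofReal_mul {F : ℂ → ℂ} {w : ℂ} (hF : ContinuousAt F w) :
    Tendsto (fun r : ℝ => (F (r * w)).im) (𝓝[<] 1) (𝓝 (F w).im) := by
  have hcont : ContinuousAt (fun r : ℝ => (F (r * w)).im) 1 :=
    Complex.continuous_im.continuousAt.comp
      (ContinuousAt.comp (g := F) (by simpa using hF) (by fun_prop))
  simpa using hcont.tendsto.mono_left nhdsWithin_le_nhds

/-- **Herglotz representation** on the unit disc: the dilations `F (r * w)` are Poisson integrals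
of measures of constant mass, and these measures accumulate as `r → 1` by compactness. -/
theorem exists_measure_im_eq_integral_poissonKernel {F : ℂ → ℂ}
    (hF : DifferentiableOn ℂ F (Metric.ball 0 1))
    (hpos : ∀ w ∈ Metric.ball (0 : ℂ) 1, 0 ≤ (F w).im) :
    ∃ ν : Measure (Metric.sphere (0 : ℂ) 1), IsFiniteMeasure ν ∧
      ∀ w ∈ Metric.ball (0 : ℂ) 1, (F w).im = ∫ ζ, poissonKernel 0 w ζ ∂ν := by
  choose! ν hν using fun r (hr : r ∈ Set.Ioo (0 : ℝ) 1) =>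
    exists_finiteMeasure_integral_poissonKernel_eq_im_dilation hF hpos hr
  have hmass : ∀ r ∈ Set.Ioo (0 : ℝ) 1, (ν r).mass ≤ (F 0).im.toNNReal := fun r hr => by
    have hone : ∀ ζ : Metric.sphere (0 : ℂ) 1, poissonKernel 0 0 ζ = 1 := fun ζ => by
      simp [poissonKernel_def]
    have hint := hν r hr 0 (by simp)
    simp only [hone, integral_const, smul_eq_mul, mul_one, mul_zero] at hint
    exact NNReal.le_toNNReal_of_coe_le hint.le
  let U : Ultrafilter ℝ := .of (𝓝[<] 1)
  have hU : ↑U ≤ 𝓝[<] (1 : ℝ) := Ultrafilter.of_le _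
  have hIoo : ∀ᶠ r in U, r ∈ Set.Ioo (0 : ℝ) 1 := hU (Ioo_mem_nhdsLT zero_lt_one)
  obtain ⟨ν₁, -, hν₁⟩ := (isCompact_setOfPred_finiteMeasure_le_of_compactSpace
    (Metric.sphere (0 : ℂ) 1) (F 0).im.toNNReal).ultrafilter_le_nhds (U.map ν)
      (le_principal_iff.2 (hIoo.mono hmass))
  refine ⟨ν₁, inferInstance, fun w hw => ?_⟩
  have hweak := FiniteMeasure.tendsto_iff_forall_integral_tendsto.1
    (show Tendsto ν U (𝓝 ν₁) from hν₁)
    (.mkOfCompact ⟨_, (continuousOn_poissonKernel_sphere hw).domRestrict⟩)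
  have hradial := tendsto_im_ofReal_mul
    (hF.differentiableAt (Metric.isOpen_ball.mem_nhds hw)).continuousAt
  exact tendsto_nhds_unique (hradial.mono_left hU)
    (hweak.congr' (hIoo.mono fun r hr => hν r hr w hw))

end HerglotzDisc

section HerglotzHalfPlane

/-- The Cayley transform, from the unit disc onto the upper half-plane; it maps `0` to `I` and the
boundary point `1` to infinity. -/
noncomputable def cayley (w : ℂ) : ℂ := Complex.I * (1 + w) / (1 - w)

lemma im_cayley (w : ℂ) : (cayley w).im = (1 - ‖w‖ ^ 2) / ‖1 - w‖ ^ 2 := by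
  rw [← Complex.normSq_eq_norm_sq, ← Complex.normSq_eq_norm_sq, cayley, Complex.div_im,
    Complex.normSq_apply w]
  simp only [Complex.mul_im, Complex.I_re, Complex.add_im, Complex.one_im, zero_add, zero_mul,
    Complex.I_im, Complex.add_re, Complex.one_re, one_mul, Complex.sub_re, Complex.mul_re, zero_sub,
    Complex.sub_im, mul_neg, neg_mul, neg_neg]
  ring

lemma im_cayley_pos {w : ℂ} (hw : w ∈ Metric.ball (0 : ℂ) 1) : 0 < (cayley w).im := by
  have hne := one_sub_ne_zero_of_mem_ball hw
  rw [mem_ball_zero_iff] at hw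
  rw [im_cayley]
  have hnum : 0 < 1 - ‖w‖ ^ 2 := by nlinarith [norm_nonneg w]
  positivity

lemma differentiableOn_cayley : DifferentiableOn ℂ cayley (Metric.ball 0 1) :=
  .div (by fun_prop) (by fun_prop) fun _ => one_sub_ne_zero_of_mem_ball

lemma exists_mem_ball_cayley_eq {z : ℂ} (hz : 0 < z.im) :
    ∃ w ∈ Metric.ball (0 : ℂ) 1, cayley w = z := by
  have hne : z + Complex.I ≠ 0 := fun h => by
    have him := congrArg Complex.im h
    simp only [Complex.add_im, Complex.I_im, Complex.zero_im] at him
    linarith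
  have hw : (z - Complex.I) / (z + Complex.I) ∈ Metric.ball (0 : ℂ) 1 := by
    rw [mem_ball_zero_iff, norm_div, div_lt_one (norm_pos_iff.2 hne),
      ← sq_lt_sq₀ (norm_nonneg _) (norm_nonneg _), ← Complex.normSq_eq_norm_sq,
      ← Complex.normSq_eq_norm_sq, Complex.normSq_apply, Complex.normSq_apply]
    simp only [Complex.sub_re, Complex.sub_im, Complex.add_re, Complex.add_im, Complex.I_re,
      Complex.I_im]
    nlinarith
  refine ⟨_, hw, ?_⟩
  rw [cayley, div_eq_iff (one_sub_ne_zero_of_mem_ball hw)]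
  field_simp
  ring

lemma ofReal_re_cayley {ζ : ℂ} (hζ : ‖ζ‖ = 1) : ((cayley ζ).re : ℂ) = cayley ζ := by
  rw [← Complex.conj_eq_iff_re, Complex.conj_eq_iff_im, im_cayley, hζ]
  simp

lemma poissonKernel_zero_one_eq_im_cayley (w : ℂ) : poissonKernel 0 w 1 = (cayley w).im := by
  simp [poissonKernel_def, im_cayley]

lemma halfPlanePoissonKernel_eq_im_div_norm_sq (z : ℂ) (x : ℝ) :
    halfPlanePoissonKernel z x = z.im / ‖(x : ℂ) - z‖ ^ 2 := by
  rw [← Complex.normSq_eq_norm_sq, Complex.normSq_apply, halfPlanePoissonKernel]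
  simp [sq]

/-- Uses `cayley ζ - cayley w = 2 * I * (ζ - w) / ((1 - ζ) * (1 - w))` and
`cayley ζ + I = 2 * I / (1 - ζ)`. -/
lemma poissonKernel_zero_eq_halfPlanePoissonKernel {w ζ : ℂ} (hw : w ∈ Metric.ball (0 : ℂ) 1)
    (hζ : ‖ζ‖ = 1) (hζ1 : ζ ≠ 1) :
    poissonKernel 0 w ζ =
      (1 + (cayley ζ).re ^ 2) * halfPlanePoissonKernel (cayley w) (cayley ζ).re := by
  have hw' := one_sub_ne_zero_of_mem_ball hw
  have hζ' : 1 - ζ ≠ 0 := sub_ne_zero.2 hζ1.symm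
  have hsub : cayley ζ - cayley w = 2 * Complex.I * (ζ - w) / ((1 - ζ) * (1 - w)) := by
    rw [cayley, cayley]; field_simp; ring
  have hadd : cayley ζ + Complex.I = 2 * Complex.I / (1 - ζ) := by
    rw [cayley]; field_simp; ring
  have hsq : 1 + (cayley ζ).re ^ 2 = 4 / ‖1 - ζ‖ ^ 2 := by
    calc 1 + (cayley ζ).re ^ 2 = Complex.normSq ((cayley ζ).re + (1 : ℝ) * Complex.I) := by
          rw [Complex.normSq_add_mul_I]; ring
      _ = 4 / ‖1 - ζ‖ ^ 2 := by
          rw [Complex.ofReal_one, one_mul, ofReal_re_cayley hζ, hadd, Complex.normSq_eq_norm_sq]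
          simp only [norm_div, norm_mul, Complex.norm_ofNat, Complex.norm_I, div_pow]
          norm_num
  rw [halfPlanePoissonKernel_eq_im_div_norm_sq, ofReal_re_cayley hζ, hsub, hsq, im_cayley,
    poissonKernel_def]
  have hw_norm : ‖1 - w‖ ≠ 0 := norm_ne_zero_iff.2 hw'
  have hζ_norm : ‖1 - ζ‖ ≠ 0 := norm_ne_zero_iff.2 hζ'
  simp only [sub_zero, hζ, norm_div, norm_mul, Complex.norm_ofNat, Complex.norm_I]
  field_simp
  norm_num

@[fun_prop]
lemma measurable_cayley : Measurable cayley := by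
  unfold cayley; fun_prop

lemma integrable_poissonKernel_zero (ν : Measure (Metric.sphere (0 : ℂ) 1)) [IsFiniteMeasure ν]
    {w : ℂ} (hw : w ∈ Metric.ball (0 : ℂ) 1) :
    Integrable (fun ζ : Metric.sphere (0 : ℂ) 1 => poissonKernel 0 w ζ) ν :=
  (continuousOn_poissonKernel_sphere hw).domRestrict.integrable_of_hasCompactSupport
    (.of_compactSpace _)

lemma exists_measure_integral_poissonKernel_eq (ν : Measure (Metric.sphere (0 : ℂ) 1))
    [IsFiniteMeasure ν] :
    ∃ b : ℝ, 0 ≤ b ∧ ∃ κ : Measure ℝ, IsFiniteMeasure κ ∧ ∀ w ∈ Metric.ball (0 : ℂ) 1,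
      ∫ ζ, poissonKernel 0 w ζ ∂ν =
        b * (cayley w).im + ∫ x, (1 + x ^ 2) * halfPlanePoissonKernel (cayley w) x ∂κ := by
  let one : Metric.sphere (0 : ℂ) 1 := ⟨1, by simp⟩
  let φ : Metric.sphere (0 : ℂ) 1 → ℝ := fun ζ => (cayley ζ).re
  have hφ : Measurable φ := by fun_prop
  refine ⟨ν.real {one}, measureReal_nonneg, (ν.restrict {one}ᶜ).map φ, inferInstance,
    fun w hw => ?_⟩
  have hkernel : ∫ ζ in {one}ᶜ, poissonKernel 0 w ζ ∂ν =
      ∫ ζ in {one}ᶜ, (1 + φ ζ ^ 2) * halfPlanePoissonKernel (cayley w) (φ ζ) ∂ν :=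
    setIntegral_congr_fun (measurableSet_singleton _).compl fun ζ hζ =>
      poissonKernel_zero_eq_halfPlanePoissonKernel hw (mem_sphere_zero_iff_norm.1 ζ.2)
        fun h => hζ (Subtype.ext h)
  rw [← integral_add_compl (measurableSet_singleton one) (integrable_poissonKernel_zero ν hw),
    hkernel, integral_singleton, smul_eq_mul, poissonKernel_zero_one_eq_im_cayley,
    integral_map hφ.aemeasurable (by fun_prop)]

/-- **Nevanlinna representation** of a holomorphic function from the upper half-plane to its
closure: transport of the Herglotz representation by the Cayley transform. The coefficient `b` is
the mass of the representing measure of the circle at `1`, the point at infinity. -/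
theorem exists_measure_im_eq_integral_halfPlanePoissonKernel {G : ℂ → ℂ}
    (hG : DifferentiableOn ℂ G {z | 0 < z.im}) (hpos : ∀ z : ℂ, 0 < z.im → 0 ≤ (G z).im) :
    ∃ b : ℝ, 0 ≤ b ∧ ∃ κ : Measure ℝ, IsFiniteMeasure κ ∧ ∀ z : ℂ, 0 < z.im →
      (G z).im = b * z.im + ∫ x, (1 + x ^ 2) * halfPlanePoissonKernel z x ∂κ := by
  obtain ⟨ν, _, hν⟩ := exists_measure_im_eq_integral_poissonKernel (F := G ∘ cayley)
    (hG.comp differentiableOn_cayley fun _ => im_cayley_pos) fun w hw => hpos _ (im_cayley_pos hw)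
  obtain ⟨b, hb, κ, hκ, hbκ⟩ := exists_measure_integral_poissonKernel_eq ν
  refine ⟨b, hb, κ, hκ, fun z hz => ?_⟩
  obtain ⟨w, hw, rfl⟩ := exists_mem_ball_cayley_eq hz
  exact (hν w hw).trans (hbκ w hw)

lemma one_add_sq_mul_halfPlanePoissonKernel_le {z : ℂ} (hz : 0 < z.im) (x : ℝ) :
    (1 + x ^ 2) * halfPlanePoissonKernel z x ≤
      (1 + 2 * z.re ^ 2) * halfPlanePoissonKernel z x + 2 * z.im := by
  have hP := halfPlanePoissonKernel_pos hz x
  have hle : (x - z.re) ^ 2 * halfPlanePoissonKernel z x ≤ z.im := by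
    rw [halfPlanePoissonKernel, mul_div_assoc', div_le_iff₀ (by positivity)]
    nlinarith [pow_pos hz 3]
  have hsq : x ^ 2 ≤ 2 * z.re ^ 2 + 2 * (x - z.re) ^ 2 := by nlinarith [sq_nonneg (x - 2 * z.re)]
  nlinarith

lemma integral_one_add_sq_mul_halfPlanePoissonKernel_le (κ : Measure ℝ) [IsFiniteMeasure κ] {z : ℂ}
    (hz : 0 < z.im) :
    ∫ x, (1 + x ^ 2) * halfPlanePoissonKernel z x ∂κ ≤
      (1 + 2 * z.re ^ 2) * poissonIntegral κ z + 2 * z.im * κ.real Set.univ := by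
  have hint := (integrable_halfPlanePoissonKernel κ hz).const_mul (1 + 2 * z.re ^ 2)
  calc _ ≤ ∫ x, ((1 + 2 * z.re ^ 2) * halfPlanePoissonKernel z x + 2 * z.im) ∂κ := by
        refine integral_mono_of_nonneg (.of_forall fun x => ?_) (hint.add (integrable_const _))
          (.of_forall (one_add_sq_mul_halfPlanePoissonKernel_le hz))
        have hP := halfPlanePoissonKernel_pos hz x
        positivity
    _ = _ := by
        rw [integral_add hint (integrable_const _), integral_const_mul, integral_const,
          smul_eq_mul, mul_comm (κ.real _), poissonIntegral]

lemma exists_measure_im_le_poissonIntegral {G : ℂ → ℂ}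
    (hG : DifferentiableOn ℂ G {z | 0 < z.im}) (hpos : ∀ z : ℂ, 0 < z.im → 0 ≤ (G z).im) :
    ∃ κ : Measure ℝ, IsFiniteMeasure κ ∧ κ.real Set.univ ≤ (G Complex.I).im ∧
      ∀ z : ℂ, 0 < z.im → (G z).im ≤
        (1 + 2 * z.re ^ 2) * poissonIntegral κ z + 2 * z.im * (G Complex.I).im := by
  obtain ⟨b, hb, κ, hκ, hrepr⟩ := exists_measure_im_eq_integral_halfPlanePoissonKernel hG hpos
  have hker : ∀ x : ℝ, (1 + x ^ 2) * halfPlanePoissonKernel Complex.I x = 1 := fun x => by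
    simp only [halfPlanePoissonKernel, Complex.I_re, Complex.I_im]
    field_simp
    ring
  have hmass : (G Complex.I).im = b + κ.real Set.univ := by
    simpa [hker] using hrepr Complex.I (by simp)
  refine ⟨κ, hκ, by linarith, fun z hz => ?_⟩
  have hle := integral_one_add_sq_mul_halfPlanePoissonKernel_le κ hz
  have hbz : 0 ≤ b * z.im := by positivity
  rw [hrepr z hz, hmass]
  linarith

end HerglotzHalfPlane

lemma sq_norm_integral_smul_le {α E : Type*} {mα : MeasurableSpace α} [NormedAddCommGroup E]
    [NormedSpace ℝ E] {μ : Measure α} {f : α → ℝ} {g : α → E} (hf : MemLp f 2 μ)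
    (hg : MemLp g 2 μ) :
    ‖∫ x, f x • g x ∂μ‖ ^ 2 ≤ (∫ x, f x ^ 2 ∂μ) * ∫ x, ‖g x‖ ^ 2 ∂μ := by
  have hholder := integral_mul_norm_le_Lp_mul_Lq (f := f) (g := fun x => ‖g x‖) (μ := μ)
    Real.HolderConjugate.two_two (by simpa using hf) (by simpa using hg.norm)
  simp only [Real.rpow_two, ← Real.sqrt_eq_rpow, Real.norm_eq_abs, sq_abs, abs_norm] at hholder
  calc ‖∫ x, f x • g x ∂μ‖ ^ 2 ≤ (√(∫ x, f x ^ 2 ∂μ) * √(∫ x, ‖g x‖ ^ 2 ∂μ)) ^ 2 := by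
        gcongr
        refine (norm_integral_le_integral_norm _).trans ?_
        simpa only [norm_smul, Real.norm_eq_abs] using hholder
    _ = _ := by
        rw [mul_pow, Real.sq_sqrt (integral_nonneg fun x => sq_nonneg _),
          Real.sq_sqrt (integral_nonneg fun x => sq_nonneg _)]

section BorelTransform

/-- The Borel transform of the signed measure `f μ`. -/
noncomputable def borelTransform (μ : Measure ℝ) (f : ℝ → ℝ) (z : ℂ) : ℂ :=
  ∫ x, f x • ((x : ℂ) - z)⁻¹ ∂μ

/-- The Borel transform of `f μ` divided by that of `μ`, whose boundary values recover `f`. -/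
noncomputable def normalizedBorelTransform (μ : Measure ℝ) (f : ℝ → ℝ) (z : ℂ) : ℂ :=
  borelTransform μ f z / borelTransform μ 1 z

variable {μ : Measure ℝ} {f g r : ℝ → ℝ} {z : ℂ}

lemma norm_inv_ofReal_sub_le {c : ℝ} (hc : 0 < c) (hz : c ≤ z.im) (x : ℝ) :
    ‖((x : ℂ) - z)⁻¹‖ ≤ c⁻¹ := by
  rw [norm_inv]
  gcongr
  have him := Complex.abs_im_le_norm ((x : ℂ) - z)
  simp only [Complex.sub_im, Complex.ofReal_im, zero_sub, abs_neg] at him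
  exact hz.trans ((le_abs_self _).trans him)

lemma integrable_smul_inv_ofReal_sub (hf : Integrable f μ) (hz : 0 < z.im) :
    Integrable (fun x : ℝ => f x • ((x : ℂ) - z)⁻¹) μ :=
  hf.smul_bdd z.im⁻¹ (by fun_prop) (.of_forall (norm_inv_ofReal_sub_le hz le_rfl))

lemma borelTransform_sub (hf : Integrable f μ) (hg : Integrable g μ) (hz : 0 < z.im) :
    borelTransform μ (f - g) z = borelTransform μ f z - borelTransform μ g z := by
  simp only [borelTransform, Pi.sub_apply, sub_smul]
  exact integral_sub (integrable_smul_inv_ofReal_sub hf hz) (integrable_smul_inv_ofReal_sub hg hz)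

lemma normalizedBorelTransform_sub (hf : Integrable f μ) (hg : Integrable g μ) (hz : 0 < z.im) :
    normalizedBorelTransform μ (f - g) z =
      normalizedBorelTransform μ f z - normalizedBorelTransform μ g z := by
  simp only [normalizedBorelTransform, borelTransform_sub hf hg hz, sub_div]

lemma borelTransform_const (μ : Measure ℝ) (c : ℝ) (z : ℂ) :
    borelTransform μ (fun _ => c) z = c * borelTransform μ 1 z := by
  simp [borelTransform, integral_const_mul]

lemma differentiableOn_borelTransform (hf : Integrable f μ) :
    DifferentiableOn ℂ (borelTransform μ f) {z | 0 < z.im} := by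
  intro z (hz : 0 < z.im)
  have hnhds : {w : ℂ | z.im / 2 < w.im} ∈ 𝓝 z :=
    (isOpen_lt continuous_const Complex.continuous_im).mem_nhds (half_lt_self hz)
  have hderiv : ∀ x : ℝ, ∀ w ∈ {w : ℂ | z.im / 2 < w.im},
      HasDerivAt (fun w : ℂ => f x • ((x : ℂ) - w)⁻¹) (f x • ((x : ℂ) - w)⁻¹ ^ 2) w := by
    intro x w (hw : z.im / 2 < w.im)
    have hne : (x : ℂ) - w ≠ 0 := fun h => by
      rw [← sub_eq_zero.1 h, Complex.ofReal_im] at hw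
      linarith
    convert! (((hasDerivAt_id w).const_sub (x : ℂ)).inv hne).const_smul (f x) using 1
    simp [field]
  have hbound : ∀ x : ℝ, ∀ w ∈ {w : ℂ | z.im / 2 < w.im},
      ‖f x • ((x : ℂ) - w)⁻¹ ^ 2‖ ≤ ‖f x‖ * (z.im / 2)⁻¹ ^ 2 := by
    intro x w (hw : z.im / 2 < w.im)
    rw [norm_smul, norm_pow]
    gcongr
    exact norm_inv_ofReal_sub_le (half_pos hz) hw.le x
  exact (hasDerivAt_integral_of_dominated_loc_of_deriv_le hnhds
    (.of_forall fun w => hf.aestronglyMeasurable.smul (by fun_prop))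
    (integrable_smul_inv_ofReal_sub hf hz) (hf.aestronglyMeasurable.smul (by fun_prop))
    (.of_forall hbound) (hf.norm.mul_const _)
    (.of_forall hderiv)).2.differentiableAt.differentiableWithinAt

lemma im_borelTransform (hf : Integrable f μ) (hz : 0 < z.im) :
    (borelTransform μ f z).im = ∫ x, f x * halfPlanePoissonKernel z x ∂μ := by
  rw [borelTransform, ← Complex.imCLM_apply,
    ← Complex.imCLM.integral_comp_comm (integrable_smul_inv_ofReal_sub hf hz)]
  congr! 2 with x
  rw [Complex.imCLM_apply, Complex.smul_im, smul_eq_mul, Complex.inv_im,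
    Complex.normSq_eq_norm_sq, halfPlanePoissonKernel_eq_im_div_norm_sq]
  simp

variable [IsFiniteMeasure μ]

lemma im_borelTransform_one (hz : 0 < z.im) : (borelTransform μ 1 z).im = poissonIntegral μ z := by
  have hone : Integrable (1 : ℝ → ℝ) μ := integrable_const 1
  simp [im_borelTransform hone hz, poissonIntegral]

lemma poissonIntegral_le_norm_borelTransform_one (hz : 0 < z.im) :
    poissonIntegral μ z ≤ ‖borelTransform μ 1 z‖ :=
  (im_borelTransform_one hz).symm.trans_le ((le_abs_self _).trans (Complex.abs_im_le_norm _))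

lemma borelTransform_one_ne_zero [NeZero μ] (hz : 0 < z.im) : borelTransform μ 1 z ≠ 0 :=
  norm_pos_iff.1 ((poissonIntegral_pos μ hz).trans_le
    (poissonIntegral_le_norm_borelTransform_one hz))

lemma sq_norm_borelTransform_le (hr : MemLp r 2 μ) (hz : 0 < z.im) :
    ‖borelTransform μ r z‖ ^ 2 ≤ (∫ x, r x ^ 2 ∂μ) * (poissonIntegral μ z / z.im) := by
  have hkernel : ∫ x : ℝ, ‖((x : ℂ) - z)⁻¹‖ ^ 2 ∂μ = poissonIntegral μ z / z.im := by
    rw [poissonIntegral, ← integral_div]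
    congr! 2 with _
    rw [halfPlanePoissonKernel_eq_im_div_norm_sq, norm_inv]
    field_simp
  rw [← hkernel]
  exact sq_norm_integral_smul_le hr
    (.of_bound (by fun_prop) _ (.of_forall (norm_inv_ofReal_sub_le hz le_rfl)))

end BorelTransform

section RatioMajorant

/-- A holomorphic function on the upper half-plane whose imaginary part controls the square of
`normalizedBorelTransform μ r`; see `half_sq_norm_normalizedBorelTransform_mul_le`. -/
noncomputable def ratioMajorant (μ : Measure ℝ) (r : ℝ → ℝ) (z : ℂ) : ℂ :=
  2 * borelTransform μ (fun x => r x ^ 2) z - borelTransform μ r z ^ 2 / borelTransform μ 1 z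

variable {μ : Measure ℝ} [IsFiniteMeasure μ] {r : ℝ → ℝ} {z : ℂ}

lemma integrable_mul_halfPlanePoissonKernel {f : ℝ → ℝ} (hf : Integrable f μ) (hz : 0 < z.im) :
    Integrable (fun x => f x * halfPlanePoissonKernel z x) μ :=
  hf.mul_bdd (integrable_halfPlanePoissonKernel μ hz).aestronglyMeasurable
    (.of_forall (norm_halfPlanePoissonKernel_le_inv_im hz))

lemma integral_sq_add_sq_norm_sub_mul_halfPlanePoissonKernel (hr : MemLp r 2 μ) (hz : 0 < z.im)
    (c : ℂ) :
    ∫ x, (r x ^ 2 + ‖r x - c‖ ^ 2) * halfPlanePoissonKernel z x ∂μ =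
      2 * (borelTransform μ (fun x => r x ^ 2) z).im - 2 * c.re * (borelTransform μ r z).im +
        ‖c‖ ^ 2 * poissonIntegral μ z := by
  have hP := integrable_halfPlanePoissonKernel μ hz
  have hr₁ := hr.integrable one_le_two
  have hrP := integrable_mul_halfPlanePoissonKernel hr₁ hz
  have hr2P := integrable_mul_halfPlanePoissonKernel hr.integrable_sq hz
  have hdiff : Integrable (fun x => 2 * (r x ^ 2 * halfPlanePoissonKernel z x) -
      2 * c.re * (r x * halfPlanePoissonKernel z x)) μ :=
    (hr2P.const_mul 2).sub (hrP.const_mul (2 * c.re))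
  rw [im_borelTransform hr.integrable_sq hz, im_borelTransform hr₁ hz, poissonIntegral,
    ← integral_const_mul, ← integral_const_mul, ← integral_const_mul,
    ← integral_sub (hr2P.const_mul _) (hrP.const_mul _), ← integral_add hdiff (hP.const_mul _)]
  congr! 2 with x
  rw [← Complex.normSq_eq_norm_sq, ← Complex.normSq_eq_norm_sq, Complex.normSq_apply,
    Complex.normSq_apply, Complex.sub_re, Complex.sub_im, Complex.ofReal_re, Complex.ofReal_im]
  ring

/-- Uses `h ^ 2 = 2 * h.re * h - ‖h‖ ^ 2` for the normalized Borel transform `h` of `r`. -/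
lemma im_ratioMajorant [NeZero μ] (hr : MemLp r 2 μ) (hz : 0 < z.im) :
    (ratioMajorant μ r z).im =
      ∫ x, (r x ^ 2 + ‖r x - normalizedBorelTransform μ r z‖ ^ 2) *
        halfPlanePoissonKernel z x ∂μ := by
  have hne := borelTransform_one_ne_zero (μ := μ) hz
  set h := normalizedBorelTransform μ r z
  have hr_eq : borelTransform μ r z = h * borelTransform μ 1 z :=
    (div_mul_cancel₀ _ hne).symm
  have hquot : borelTransform μ r z ^ 2 / borelTransform μ 1 z = h ^ 2 * borelTransform μ 1 z := by
    rw [hr_eq]; field_simp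
  rw [integral_sq_add_sq_norm_sub_mul_halfPlanePoissonKernel hr hz, ratioMajorant, hquot, hr_eq,
    ← im_borelTransform_one hz, ← Complex.normSq_eq_norm_sq, Complex.normSq_apply]
  simp only [pow_two, Complex.sub_im, Complex.mul_im, Complex.mul_re, Complex.re_ofNat,
    Complex.im_ofNat]
  ring

lemma half_sq_norm_normalizedBorelTransform_mul_le [NeZero μ] (hr : MemLp r 2 μ) (hz : 0 < z.im) :
    ‖normalizedBorelTransform μ r z‖ ^ 2 / 2 * poissonIntegral μ z ≤ (ratioMajorant μ r z).im := by
  set h := normalizedBorelTransform μ r z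
  have hpointwise : ∀ x, ‖h‖ ^ 2 / 2 ≤ r x ^ 2 + ‖r x - h‖ ^ 2 := fun x => by
    have htri : ‖h‖ ≤ |r x| + ‖r x - h‖ := by
      simpa using norm_sub_le (r x : ℂ) (r x - h)
    nlinarith [norm_nonneg h, sq_nonneg (|r x| - ‖r x - h‖), sq_abs (r x)]
  have hint : Integrable (fun x => (r x ^ 2 + ‖r x - h‖ ^ 2) * halfPlanePoissonKernel z x) μ := by
    refine integrable_mul_halfPlanePoissonKernel (hr.integrable_sq.add ?_) hz
    exact (hr.ofReal.sub (memLp_const h)).norm.integrable_sq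
  rw [im_ratioMajorant hr hz, poissonIntegral, ← integral_const_mul]
  refine integral_mono ((integrable_halfPlanePoissonKernel μ hz).const_mul _) hint fun x => ?_
  exact mul_le_mul_of_nonneg_right (hpointwise x) (halfPlanePoissonKernel_pos hz x).le

lemma im_ratioMajorant_nonneg [NeZero μ] (hr : MemLp r 2 μ) (hz : 0 < z.im) :
    0 ≤ (ratioMajorant μ r z).im :=
  le_trans (mul_nonneg (by positivity) (poissonIntegral_nonneg μ hz))
    (half_sq_norm_normalizedBorelTransform_mul_le hr hz)

lemma differentiableOn_ratioMajorant [NeZero μ] (hr : MemLp r 2 μ) :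
    DifferentiableOn ℂ (ratioMajorant μ r) {z | 0 < z.im} :=
  ((differentiableOn_borelTransform hr.integrable_sq).const_mul 2).sub
    (((differentiableOn_borelTransform (hr.integrable one_le_two)).pow 2).div
      (differentiableOn_borelTransform (integrable_const 1)) fun _ => borelTransform_one_ne_zero)

lemma im_ratioMajorant_le [NeZero μ] (hr : MemLp r 2 μ) (hz : 0 < z.im) :
    (ratioMajorant μ r z).im ≤ 3 * (∫ x, r x ^ 2 ∂μ) / z.im := by
  have hP := poissonIntegral_pos μ hz
  have hsquare : (borelTransform μ (fun x => r x ^ 2) z).im ≤ (∫ x, r x ^ 2 ∂μ) / z.im := by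
    rw [im_borelTransform hr.integrable_sq hz, ← integral_div]
    refine integral_mono (integrable_mul_halfPlanePoissonKernel hr.integrable_sq hz)
      (hr.integrable_sq.div_const _) fun x => ?_
    exact mul_le_mul_of_nonneg_left (halfPlanePoissonKernel_le_inv_im hz x) (sq_nonneg _)
  have hquot : ‖borelTransform μ r z ^ 2 / borelTransform μ 1 z‖ ≤ (∫ x, r x ^ 2 ∂μ) / z.im := by
    rw [norm_div, norm_pow]
    calc _ ≤ (∫ x, r x ^ 2 ∂μ) * (poissonIntegral μ z / z.im) / poissonIntegral μ z := by
          gcongr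
          · exact sq_norm_borelTransform_le hr hz
          · exact poissonIntegral_le_norm_borelTransform_one hz
      _ = _ := by field_simp
  have him := (neg_le_abs _).trans ((Complex.abs_im_le_norm _).trans hquot)
  have htwo (w : ℂ) : (2 * w).im = 2 * w.im := by simp
  rw [ratioMajorant, Complex.sub_im, htwo, mul_div_assoc]
  linarith

end RatioMajorant

section SquareIntegrable

lemma enorm_sq_eq_ofReal_sq (a : ℝ) : ‖a‖ₑ ^ 2 = ENNReal.ofReal (a ^ 2) := by
  rw [Real.enorm_eq_ofReal_abs, ← ENNReal.ofReal_pow (abs_nonneg a), sq_abs]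

lemma eLpNorm_two_sq {α E : Type*} {mα : MeasurableSpace α} [NormedAddCommGroup E] (f : α → E)
    (μ : Measure α) : eLpNorm f 2 μ ^ 2 = ∫⁻ x, ‖f x‖ₑ ^ 2 ∂μ := by
  simpa using eLpNorm_nnreal_pow_eq_lintegral (f := f) (μ := μ) (p := 2) two_ne_zero

lemma exists_lipschitzWith_eLpNorm_sub_le {E F : Type*} [NormedAddCommGroup E] [NormedSpace ℝ E]
    [FiniteDimensional ℝ E] [MeasurableSpace E] [BorelSpace E] [NormedAddCommGroup F]
    [NormedSpace ℝ F] {μ : Measure E} [IsFiniteMeasureOnCompacts μ] {p : ℝ≥0∞} (hp : p ≠ ∞)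
    (hp₁ : 1 ≤ p) {f : E → F} (hf : MemLp f p μ) {δ : ℝ} (hδ : 0 < δ) :
    ∃ g : E → F, (∃ K, LipschitzWith K g) ∧ MemLp g p μ ∧
      eLpNorm (f - g) p μ ≤ ENNReal.ofReal δ := by
  obtain ⟨g, hcompact, hsmooth, hg⟩ := hf.exist_eLpNorm_sub_le hp hp₁ hδ
  exact ⟨g, hsmooth.lipschitzWith_of_hasCompactSupport hcompact (by simp),
    hsmooth.continuous.memLp_of_hasCompactSupport hcompact, hg⟩

lemma ae_iInf_eq_zero_of_tendsto_lintegral {α : Type*} {mα : MeasurableSpace α} {μ : Measure α}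
    {S : ℕ → α → ℝ≥0∞} (hS : ∀ n, AEMeasurable (S n) μ)
    (h : Tendsto (fun n => ∫⁻ x, S n x ∂μ) atTop (𝓝 0)) : ∀ᵐ x ∂μ, ⨅ n, S n x = 0 := by
  refine (lintegral_eq_zero_iff' (AEMeasurable.iInf hS)).1 (le_antisymm ?_ zero_le)
  exact ge_of_tendsto' h fun n => lintegral_mono fun x => iInf_le _ n

end SquareIntegrable

section Convergence

variable {μ ν : Measure ℝ} [IsFiniteMeasure μ] {f r : ℝ → ℝ}

lemma exists_measure_im_ratioMajorant_le [NeZero μ] (hr : MemLp r 2 μ) :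
    ∃ κ : Measure ℝ, IsFiniteMeasure κ ∧ κ Set.univ ≤ 3 * eLpNorm r 2 μ ^ 2 ∧
      ∀ z : ℂ, 0 < z.im → (ratioMajorant μ r z).im ≤
        (1 + 2 * z.re ^ 2) * poissonIntegral κ z + 2 * z.im * (ratioMajorant μ r Complex.I).im := by
  obtain ⟨κ, hκ, hmass, hle⟩ := exists_measure_im_le_poissonIntegral
    (differentiableOn_ratioMajorant hr) fun z hz => im_ratioMajorant_nonneg hr hz
  have hI : (ratioMajorant μ r Complex.I).im ≤ 3 * ∫ x, r x ^ 2 ∂μ := by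
    simpa using im_ratioMajorant_le hr (z := Complex.I) (by simp)
  refine ⟨κ, hκ, ?_, hle⟩
  calc κ Set.univ ≤ ENNReal.ofReal (3 * ∫ x, r x ^ 2 ∂μ) :=
        (ofReal_measureReal (μ := κ)).symm.trans_le (ENNReal.ofReal_le_ofReal (hmass.trans hI))
    _ = 3 * eLpNorm r 2 μ ^ 2 := by
      rw [ENNReal.ofReal_mul zero_le_three, ENNReal.ofReal_ofNat, eLpNorm_two_sq,
        ofReal_integral_eq_lintegral_ofReal hr.integrable_sq (.of_forall fun x => sq_nonneg _)]
      simp only [enorm_sq_eq_ofReal_sq]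

lemma norm_normalizedBorelTransform_le_of_im_ratioMajorant_le [NeZero μ] (hr : MemLp r 2 μ) {z : ℂ}
    (hz : 0 < z.im) {η : ℝ} (hη : 0 ≤ η)
    (h : (ratioMajorant μ r z).im ≤ η ^ 2 / 2 * poissonIntegral μ z) :
    ‖normalizedBorelTransform μ r z‖ ≤ η := by
  have hsq := le_of_mul_le_mul_right
    ((half_sq_norm_normalizedBorelTransform_mul_le hr hz).trans h) (poissonIntegral_pos μ hz)
  exact (sq_le_sq₀ (norm_nonneg _) hη).1 (by linarith)

lemma exists_lintegral_le_ae_eventually_norm_normalizedBorelTransform_le [NeZero μ]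
    (hνμ : ν ≪ μ) (hν : ν ⟂ₘ volume) (hr : MemLp r 2 μ) :
    ∃ h : ℝ → ℝ≥0∞, Measurable h ∧ ∫⁻ x, h x ∂μ ≤ 3 * eLpNorm r 2 μ ^ 2 ∧
      ∀ᵐ E : ℝ ∂ν, ∀ η > 0, h E < ENNReal.ofReal (η ^ 2 / (4 * (1 + 2 * E ^ 2))) →
        ∀ᶠ ε : ℝ in 𝓝[>] 0, ‖normalizedBorelTransform μ r (E + ε * Complex.I)‖ ≤ η := by
  obtain ⟨κ, hκ, hmass, hle⟩ := exists_measure_im_ratioMajorant_le hr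
  set b := (ratioMajorant μ r Complex.I).im
  have hb : 0 ≤ b := im_ratioMajorant_nonneg hr (by simp)
  refine ⟨κ.rnDeriv μ, Measure.measurable_rnDeriv _ _,
    Measure.lintegral_rnDeriv_le.trans hmass, ?_⟩
  filter_upwards [ae_eventually_poissonIntegral_le (κ := κ) hνμ hν,
    ae_tendsto_poissonIntegral_atTop hνμ hν] with E hκE htop η hη hlt
  filter_upwards [hκE _ hlt, htop.eventually_ge_atTop (8 * b / η ^ 2), self_mem_nhdsWithin,
    Ioo_mem_nhdsGT zero_lt_one] with ε hκε hlarge (hε : 0 < ε) hε₁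
  have hz : 0 < ((E : ℂ) + ε * Complex.I).im := by simpa using hε
  rw [div_le_iff₀ (by positivity)] at hlarge
  refine norm_normalizedBorelTransform_le_of_im_ratioMajorant_le hr hz hη.le ?_
  calc _ ≤ (1 + 2 * E ^ 2) * poissonIntegral κ (E + ε * Complex.I) + 2 * ε * b := by
        simpa using hle _ hz
    _ ≤ (1 + 2 * E ^ 2) * (η ^ 2 / (4 * (1 + 2 * E ^ 2)) *
          poissonIntegral μ (E + ε * Complex.I)) + 2 * 1 * b := by
        gcongr
        exact hε₁.2.le
    _ = η ^ 2 / 4 * poissonIntegral μ (E + ε * Complex.I) + 2 * b := by field_simp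
    _ ≤ _ := by linarith

lemma norm_normalizedBorelTransform_sub_le [NeZero μ] {g : ℝ → ℝ} {K : NNReal}
    (hg : LipschitzWith K g) (hgi : Integrable g μ) {z : ℂ} (hz : 0 < z.im) :
    ‖normalizedBorelTransform μ g z - g z.re‖ ≤ K * μ.real Set.univ / poissonIntegral μ z := by
  have hne := borelTransform_one_ne_zero (μ := μ) hz
  have hbound : ‖borelTransform μ (g - fun _ => g z.re) z‖ ≤ K * μ.real Set.univ := by
    refine norm_integral_le_of_norm_le_const (.of_forall fun x => ?_)
    have hre : |x - z.re| ≤ ‖(x : ℂ) - z‖ := by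
      simpa using Complex.abs_re_le_norm ((x : ℂ) - z)
    rw [norm_smul, norm_inv, ← div_eq_mul_inv, Pi.sub_apply]
    refine div_le_of_le_mul₀ (norm_nonneg _) K.coe_nonneg ((hg.norm_sub_le x z.re).trans ?_)
    gcongr
    exact hre
  rw [normalizedBorelTransform, div_sub' hne, norm_div, mul_comm (borelTransform μ 1 z),
    ← borelTransform_const, ← borelTransform_sub hgi (integrable_const _) hz]
  exact div_le_div₀ (by positivity) hbound (poissonIntegral_pos μ hz)
    (poissonIntegral_le_norm_borelTransform_one hz)

lemma tendsto_normalizedBorelTransform_of_lipschitzWith [NeZero μ] {g : ℝ → ℝ} {K : NNReal}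
    (hg : LipschitzWith K g) (hgi : Integrable g μ) {E : ℝ}
    (hE : Tendsto (fun ε : ℝ => poissonIntegral μ (E + ε * Complex.I)) (𝓝[>] 0) atTop) :
    Tendsto (fun ε : ℝ => normalizedBorelTransform μ g (E + ε * Complex.I)) (𝓝[>] 0)
      (𝓝 (g E : ℂ)) := by
  rw [tendsto_iff_norm_sub_tendsto_zero]
  refine squeeze_zero' (.of_forall fun _ => norm_nonneg _) ?_
    (hE.const_div_atTop (K * μ.real Set.univ))
  filter_upwards [self_mem_nhdsWithin] with ε (hε : 0 < ε)
  simpa using norm_normalizedBorelTransform_sub_le hg hgi (z := E + ε * Complex.I) (by simpa)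

lemma exists_lintegral_le_ae_eventually_norm_normalizedBorelTransform_sub_le [NeZero μ]
    (hνμ : ν ≪ μ) (hν : ν ⟂ₘ volume) (hf : MemLp f 2 μ) {δ : ℝ} (hδ : 0 < δ) :
    ∃ S : ℝ → ℝ≥0∞, AEMeasurable S μ ∧ ∫⁻ x, S x ∂μ ≤ 4 * ENNReal.ofReal δ ^ 2 ∧
      ∀ᵐ E : ℝ ∂ν, ∀ η > 0, S E < ENNReal.ofReal (η ^ 2 / (4 * (1 + 2 * E ^ 2))) →
        ∀ᶠ ε : ℝ in 𝓝[>] 0,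
          ‖normalizedBorelTransform μ f (E + ε * Complex.I) - f E‖ ≤ 3 * η := by
  obtain ⟨g, ⟨K, hgK⟩, hg, hfg⟩ := exists_lipschitzWith_eLpNorm_sub_le (by simp) one_le_two hf hδ
  obtain ⟨h, hmeas, hint, hh⟩ :=
    exists_lintegral_le_ae_eventually_norm_normalizedBorelTransform_le hνμ hν (hf.sub hg)
  refine ⟨fun x => ‖f x - g x‖ₑ ^ 2 + h x,
    ((hf.sub hg).aestronglyMeasurable.enorm.pow_const 2).add hmeas.aemeasurable, ?_, ?_⟩
  · calc _ = eLpNorm (f - g) 2 μ ^ 2 + ∫⁻ x, h x ∂μ := by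
          rw [lintegral_add_right _ hmeas, eLpNorm_two_sq]; rfl
      _ ≤ eLpNorm (f - g) 2 μ ^ 2 + 3 * eLpNorm (f - g) 2 μ ^ 2 := by gcongr
      _ = 4 * eLpNorm (f - g) 2 μ ^ 2 := by ring
      _ ≤ _ := by gcongr
  filter_upwards [hh, ae_tendsto_poissonIntegral_atTop hνμ hν] with E hhE htop η hη hS
  have hfg_lt : ‖(f E : ℂ) - g E‖ < η := by
    have hsq : ENNReal.ofReal ((f E - g E) ^ 2) < ENNReal.ofReal (η ^ 2) := by
      rw [← enorm_sq_eq_ofReal_sq]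
      refine (le_self_add.trans_lt hS).trans_le (ENNReal.ofReal_le_ofReal ?_)
      exact div_le_self (sq_nonneg _) (by nlinarith [sq_nonneg E])
    rw [← Complex.ofReal_sub, Complex.norm_real, Real.norm_eq_abs]
    exact abs_lt_of_sq_lt_sq ((ENNReal.ofReal_lt_ofReal_iff (by positivity)).1 hsq) hη.le
  have hg_lim := tendsto_iff_norm_sub_tendsto_zero.1
    (tendsto_normalizedBorelTransform_of_lipschitzWith hgK (hg.integrable one_le_two) htop)
  filter_upwards [hhE η hη (le_add_self.trans_lt hS), hg_lim.eventually_lt_const hη,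
    self_mem_nhdsWithin] with ε hdiff hgε (hε : 0 < ε)
  set z : ℂ := E + ε * Complex.I
  have hsub := normalizedBorelTransform_sub (hf.integrable one_le_two) (hg.integrable one_le_two)
    (z := z) (by simpa [z] using hε)
  calc ‖normalizedBorelTransform μ f z - f E‖
      = ‖normalizedBorelTransform μ (f - g) z + (normalizedBorelTransform μ g z - g E) -
          (f E - g E)‖ := by rw [hsub]; ring_nf
    _ ≤ η + η + η := (norm_sub_le _ _).trans
        (add_le_add ((norm_add_le _ _).trans (add_le_add hdiff hgε.le)) hfg_lt.le)
    _ = 3 * η := by ring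

theorem ae_tendsto_normalizedBorelTransform (hνμ : ν ≪ μ) (hν : ν ⟂ₘ volume) (hf : MemLp f 2 μ) :
    ∀ᵐ E : ℝ ∂ν, Tendsto (fun ε : ℝ => normalizedBorelTransform μ f (E + ε * Complex.I))
      (𝓝[>] 0) (𝓝 (f E : ℂ)) := by
  rcases eq_zero_or_neZero μ with rfl | hμ
  · simp [Measure.absolutelyContinuous_zero_iff.1 hνμ]
  choose S hS hSint hSE using fun n : ℕ =>
    exists_lintegral_le_ae_eventually_norm_normalizedBorelTransform_sub_le hνμ hν hf
      (Nat.one_div_pos_of_nat (α := ℝ) (n := n))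
  have hlim : Tendsto (fun n : ℕ => 4 * ENNReal.ofReal (1 / ((n : ℝ) + 1)) ^ 2) atTop (𝓝 0) := by
    simpa using ENNReal.Tendsto.const_mul
      (ENNReal.Tendsto.pow (n := 2)
      (ENNReal.tendsto_ofReal tendsto_one_div_add_atTop_nhds_zero_nat)) (.inr (by simp))
  have hzero := ae_iInf_eq_zero_of_tendsto_lintegral hS
    (tendsto_of_tendsto_of_tendsto_of_le_of_le tendsto_const_nhds hlim (fun _ => zero_le) hSint)
  filter_upwards [hνμ.ae_le hzero, ae_all_iff.2 hSE] with E hE hSE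
  refine Metric.tendsto_nhds.2 fun η hη => ?_
  have hη₄ : 0 < η / 4 := by positivity
  have hpos : 0 < ENNReal.ofReal ((η / 4) ^ 2 / (4 * (1 + 2 * E ^ 2))) :=
    ENNReal.ofReal_pos.2 (by positivity)
  obtain ⟨n, hn⟩ := iInf_lt_iff.1 (hE.trans_lt hpos)
  filter_upwards [hSE n (η / 4) hη₄ hn] with ε hε
  rw [dist_eq_norm]
  linarith

end Convergence

section RadonNikodym

lemma borelTransform_rnDeriv {ρ τ : Measure ℝ} [SigmaFinite ρ] [SigmaFinite τ] (h : ρ ≪ τ)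
    (z : ℂ) :
    borelTransform τ (fun x => (ρ.rnDeriv τ x).toReal) z = ∫ x : ℝ, ((x : ℂ) - z)⁻¹ ∂ρ :=
  integral_rnDeriv_smul h

lemma memLp_toReal_rnDeriv_of_le {α : Type*} {mα : MeasurableSpace α} {ρ τ : Measure α}
    [IsFiniteMeasure τ] (h : ρ ≤ τ) (p : ℝ≥0∞) : MemLp (fun x => (ρ.rnDeriv τ x).toReal) p τ := by
  have : IsFiniteMeasure ρ := isFiniteMeasure_of_le τ h
  refine .of_bound (Measure.measurable_rnDeriv _ _).ennreal_toReal.aestronglyMeasurable 1 ?_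
  filter_upwards [Measure.rnDeriv_le_one_of_le h] with x hx
  rw [Real.norm_of_nonneg ENNReal.toReal_nonneg]
  exact ENNReal.toReal_le_of_le_ofReal zero_le_one (by simpa using hx)

lemma ae_tendsto_integral_inv_div_borelTransform_one {ρ τ ν : Measure ℝ} [IsFiniteMeasure τ]
    (hρτ : ρ ≤ τ) (hντ : ν ≪ τ) (hν : ν ⟂ₘ volume) :
    ∀ᵐ E : ℝ ∂ν, Tendsto (fun ε : ℝ => (∫ x : ℝ, ((x : ℂ) - (E + ε * Complex.I))⁻¹ ∂ρ) /
      borelTransform τ 1 (E + ε * Complex.I)) (𝓝[>] 0) (𝓝 ((ρ.rnDeriv τ E).toReal : ℂ)) := by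
  have : IsFiniteMeasure ρ := isFiniteMeasure_of_le τ hρτ
  simpa only [normalizedBorelTransform, borelTransform_rnDeriv hρτ.absolutelyContinuous] using
    ae_tendsto_normalizedBorelTransform hντ hν (memLp_toReal_rnDeriv_of_le hρτ 2)

end RadonNikodym

theorem stmt_1_general (ρ σ : Measure ℝ) [IsFiniteMeasure ρ] [IsFiniteMeasure σ]
    (Mρ Mσ : ℂ → ℂ)
    (hMρ : ∀ z : ℂ, Mρ z = ∫ x : ℝ, ((x : ℂ) - z)⁻¹ ∂ρ)
    (hMσ : ∀ z : ℂ, Mσ z = ∫ x : ℝ, ((x : ℂ) - z)⁻¹ ∂σ) :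
    ∀ᵐ (E : ℝ) ∂(σ.singularPart volume),
      Tendsto (fun ε : ℝ => Mρ ((E : ℂ) + ε * Complex.I) / Mσ ((E : ℂ) + ε * Complex.I))
        (nhdsWithin 0 (Set.Ioi 0)) (nhds (((ρ.rnDeriv σ E).toReal : ℂ))) := by
  set τ := ρ + σ
  have hρτ : ρ ≤ τ := Measure.le_add_right le_rfl
  have hστ : σ ≤ τ := Measure.le_add_left le_rfl
  have hνσ : σ.singularPart volume ≪ σ := (Measure.singularPart_le σ volume).absolutelyContinuous
  have hντ := hνσ.trans hστ.absolutelyContinuous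
  have hν := Measure.mutuallySingular_singularPart σ volume
  filter_upwards [ae_tendsto_integral_inv_div_borelTransform_one hρτ hντ hν,
    ae_tendsto_integral_inv_div_borelTransform_one hστ hντ hν,
    ae_tendsto_poissonIntegral_atTop hντ hν,
    hνσ.ae_le (Measure.rnDeriv_pos hστ.absolutelyContinuous), hντ.ae_le (σ.rnDeriv_lt_top τ),
    hνσ.ae_le (Measure.rnDeriv_eq_div hρτ.absolutelyContinuous hστ.absolutelyContinuous)]
    with E hρE hσE htop hpos hfin hquot
  have hne : ((σ.rnDeriv τ E).toReal : ℂ) ≠ 0 :=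
    Complex.ofReal_ne_zero.2 (ENNReal.toReal_pos hpos.ne' hfin.ne).ne'
  rw [hquot, ENNReal.toReal_div, Complex.ofReal_div]
  refine (hρE.div hσE hne).congr' ?_
  filter_upwards [self_mem_nhdsWithin, htop.eventually_gt_atTop 0] with ε (hε : 0 < ε) hP
  have hτ_ne : borelTransform τ 1 (E + ε * Complex.I) ≠ 0 := norm_pos_iff.1
    (hP.trans_le (poissonIntegral_le_norm_borelTransform_one (by simpa using hε)))
  rw [hMρ, hMσ, Pi.div_apply, div_div_div_cancel_right₀ hτ_ne]

/-- Poltoratski's theorem. For finite positive Borel measures `ρ ≪ σ` on `ℝ`,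
with Borel transforms `M_ρ`, `M_σ`, for `σ_s`-a.e. `E` (where `σ_s` is the part of `σ`
singular w.r.t. Lebesgue measure), the ratio `M_ρ(E + iε) / M_σ(E + iε)` converges as
`ε → 0⁺` to the Radon–Nikodym derivative `(dρ/dσ)(E)`. -/
theorem stmt_1 (ρ σ : Measure ℝ) [IsFiniteMeasure ρ] [IsFiniteMeasure σ] (hac : ρ ≪ σ)
    (Mρ Mσ : ℂ → ℂ)
    (hMρ : ∀ z : ℂ, Mρ z = ∫ x : ℝ, ((x : ℂ) - z)⁻¹ ∂ρ)
    (hMσ : ∀ z : ℂ, Mσ z = ∫ x : ℝ, ((x : ℂ) - z)⁻¹ ∂σ) :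
    ∀ᵐ (E : ℝ) ∂(σ.singularPart volume),
      Tendsto (fun ε : ℝ => Mρ ((E : ℂ) + ε * Complex.I) / Mσ ((E : ℂ) + ε * Complex.I))
        (nhdsWithin 0 (Set.Ioi 0)) (nhds (((ρ.rnDeriv σ E).toReal : ℂ))) :=
  stmt_1_general ρ σ Mρ Mσ hMρ hMσ
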